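/- Fix C_u > 0, μ₁ ≥ 0, λ > 0, feature matrices X_p ∈ ℝ^{n_p×m}, X_u ∈ ℝ^{n_u×m} with n_u ≥ 1, the stacked matrix X_pu ∈ ℝ^{(n_p+n_u)×m} whose first n_p rows are X_p and last n_u rows are X_u, and a symmetric positive semidefinite matrix R ∈ ℝ^{(n_p+n_u)×(n_p+n_u)}. With M₁₁ = λI_m + 2C_u X_uᵀX_u + 2X_puᵀR X_pu + μ₁X_pᵀX_p, M₁₂ = 2C_u X_uᵀ1_u + 2X_puᵀR 1_pu + μ₁X_pᵀ1_p, M₂₁ = M₁₂ᵀ, and M₂₂ = 2C_u n_u + 2·1_puᵀR 1_pu + μ₁ n_p, the symmetric block matrix M = [[M₁₁, M₁₂], [M₂₁, M₂₂]] ∈ ℝ^{(m+1)×(m+1)} is positive definite; in particular M₂₂ > 0 and B = M₁₁ − (1/M₂₂) M₁₂ M₂₁ is symmetric positive definite, hence invertible. -/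

import Mathlib

open Matrix

/-- `M₁₁ = λI_m + 2C_u X_uᵀX_u + 2X_puᵀR X_pu + μ₁X_pᵀX_p`. -/
noncomputable def pualM11 (np nu m : ℕ) (lam Cu mu1 : ℝ)
    (Xp : Matrix (Fin np) (Fin m) ℝ) (Xu : Matrix (Fin nu) (Fin m) ℝ)
    (R : Matrix (Fin np ⊕ Fin nu) (Fin np ⊕ Fin nu) ℝ) :
    Matrix (Fin m) (Fin m) ℝ :=
  lam • (1 : Matrix (Fin m) (Fin m) ℝ) + (2 * Cu) • (Xuᵀ * Xu)
    + (2 : ℝ) • ((Matrix.fromRows Xp Xu)ᵀ * R * Matrix.fromRows Xp Xu)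
    + mu1 • (Xpᵀ * Xp)

/-- `M₁₂ = 2C_u X_uᵀ1_u + 2X_puᵀR 1_pu + μ₁X_pᵀ1_p` (an `m × 1` column vector). -/
noncomputable def pualM12 (np nu m : ℕ) (Cu mu1 : ℝ)
    (Xp : Matrix (Fin np) (Fin m) ℝ) (Xu : Matrix (Fin nu) (Fin m) ℝ)
    (R : Matrix (Fin np ⊕ Fin nu) (Fin np ⊕ Fin nu) ℝ) :
    Fin m → ℝ :=
  (2 * Cu) • Xuᵀ.mulVec (fun _ => 1)
    + (2 : ℝ) • (Matrix.fromRows Xp Xu)ᵀ.mulVec (R.mulVec fun _ => 1)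
    + mu1 • Xpᵀ.mulVec (fun _ => 1)

/-- `M₂₂ = 2C_u n_u + 2·1_puᵀR 1_pu + μ₁ n_p` (a scalar). -/
noncomputable def pualM22 (np nu : ℕ) (Cu mu1 : ℝ)
    (R : Matrix (Fin np ⊕ Fin nu) (Fin np ⊕ Fin nu) ℝ) : ℝ :=
  2 * Cu * (nu : ℝ) + 2 * ((fun _ => (1 : ℝ)) ⬝ᵥ R.mulVec (fun _ => 1))
    + mu1 * (np : ℝ)

/-!
Absorbing the intercept `β₀` into the coefficient vector `β` gives
`M = (λI ⊕ 0) + 2C_u [X_u|1]ᵀ[X_u|1] + 2 [X_pu|1]ᵀR[X_pu|1] + μ₁ [X_p|1]ᵀ[X_p|1]`.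
The last two terms are positive semidefinite. The first two have the quadratic form
`λ‖β‖² + 2C_u‖X_u β + β₀ 1‖²`, which is positive definite: `β = 0` leaves `2C_u n_u β₀²`.
-/

namespace PUAL

section SchurComplement

lemma posDef_bottomRight_of_fromBlocks {K m n : Type*} [Ring K] [PartialOrder K] [StarRing K]
    {A : Matrix m m K} {B : Matrix m n K} {C : Matrix n m K} {D : Matrix n n K}
    (h : (fromBlocks A B C D).PosDef) : D.PosDef :=
  h.submatrix (e := Sum.inr) Sum.inr_injective

variable {K m n : Type*} [Field K] [PartialOrder K] [StarRing K] [Finite m]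

-- The Schur complement is the restriction of the form to the graph `y = -D⁻¹ Bᴴ x`.
lemma posDef_schurComplement_of_fromBlocks [Fintype n] [DecidableEq n] {A : Matrix m m K}
    {B : Matrix m n K} {D : Matrix n n K} (h : (fromBlocks A B Bᴴ D).PosDef) :
    (A - B * D⁻¹ * Bᴴ).PosDef := by
  classical
  have := Fintype.ofFinite m
  have hD : D.PosDef := posDef_bottomRight_of_fromBlocks h
  have hD_det : IsUnit D.det := (isUnit_iff_isUnit_det D).mp hD.isUnit
  let V : Matrix (m ⊕ n) m K := fromRows 1 (-(D⁻¹ * Bᴴ))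
  have hV : Function.Injective V.mulVec := fun x y hxy => by
    simpa [V, fromRows_mulVec] using congrArg (· ∘ Sum.inl) hxy
  have hMV : fromBlocks A B Bᴴ D * V = fromRows (A - B * D⁻¹ * Bᴴ) 0 := by
    simp [V, fromBlocks_mul_fromRows, mul_nonsing_inv_cancel_left _ _ hD_det, Matrix.mul_assoc,
      sub_eq_add_neg]
  have hVMV : Vᴴ * fromBlocks A B Bᴴ D * V = A - B * D⁻¹ * Bᴴ := by
    simp [Matrix.mul_assoc, hMV, V, conjTranspose_fromRows_eq_fromCols_conjTranspose,
      fromCols_mul_fromRows]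
  exact hVMV ▸ h.conjTranspose_mul_mul_same hV

lemma posDef_sub_inv_smul_vecMulVec_of_fromBlocks {A : Matrix m m K} {v : m → K} {d : K}
    (h : (fromBlocks A (replicateCol Unit v) (replicateRow Unit (star v))
      (of fun _ _ => d)).PosDef) :
    (A - d⁻¹ • vecMulVec v (star v)).PosDef := by
  let D : Matrix Unit Unit K := of fun _ _ => d
  have hschur : replicateCol Unit v * D⁻¹ * (replicateCol Unit v)ᴴ =
      d⁻¹ • vecMulVec v (star v) := by
    ext i j
    simp [D, mul_apply, vecMulVec_apply, mul_left_comm, mul_assoc]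
  exact hschur ▸ posDef_schurComplement_of_fromBlocks (conjTranspose_replicateCol v ▸ h)

end SchurComplement

section RidgeRegression

variable {K m n k : Type*} [CommRing K] [PartialOrder K] [StarRing K] [StarOrderedRing K]
  [NoZeroDivisors K] [Finite m] [Fintype n] [Fintype k] [DecidableEq m]

-- The form is `a‖w‖² + b‖X w + Y t‖²`, the pullback of a diagonal one along
-- the injective map `(w, t) ↦ (w, X w + Y t)`.
lemma posDef_ridge_add_gram_fromCols {a b : K} (ha : 0 < a) (hb : 0 < b) (X : Matrix n m K)
    {Y : Matrix n k K} (hY : Function.Injective Y.mulVec) :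
    (fromBlocks (a • 1) 0 0 0 + b • ((fromCols X Y)ᴴ * fromCols X Y)).PosDef := by
  classical
  have := Fintype.ofFinite m
  let B : Matrix (m ⊕ n) (m ⊕ k) K := fromBlocks 1 0 X Y
  let d : m ⊕ n → K := Sum.elim (fun _ => a) (fun _ => b)
  have hB : Function.Injective B.mulVec := by
    intro u v huv
    obtain ⟨hl, hr⟩ : u ∘ Sum.inl = v ∘ Sum.inl ∧ _ := by
      simpa [B, fromBlocks_mulVec, Sum.elim_eq_iff] using huv
    rw [hl, add_right_inj] at hr
    rw [← Sum.elim_comp_inl_inr u, hl, hY hr, Sum.elim_comp_inl_inr]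
  have hd : (diagonal d).PosDef := .diagonal (by rintro (_ | _) <;> assumption)
  have hBdB : Bᴴ * diagonal d * B =
      fromBlocks (a • 1) 0 0 0 + b • ((fromCols X Y)ᴴ * fromCols X Y) := by
    have hd_blocks : diagonal d = fromBlocks (a • 1) 0 0 (b • 1) := by
      simp [d, ← fromBlocks_diagonal, smul_one_eq_diagonal]
    simp [B, hd_blocks, fromBlocks_conjTranspose, fromBlocks_multiply, fromBlocks_add,
      fromBlocks_smul, conjTranspose_fromCols_eq_fromRows_conjTranspose]
  exact hBdB ▸ hd.conjTranspose_mul_mul_same hB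

end RidgeRegression

section Intercept

variable {K m n : Type*}

/-- The augmented feature matrix `[X | 1]`, which absorbs the intercept `β₀` into the coefficient
vector: `[X | 1] (β, β₀) = X β + β₀ 1`. The intercept is indexed by `Unit`. -/
def withIntercept [One K] (X : Matrix n m K) : Matrix n (m ⊕ Unit) K :=
  fromCols X (replicateCol Unit 1)

lemma mulVec_replicateCol_one_injective [NonAssocSemiring K] [Nonempty n] :
    Function.Injective (replicateCol Unit (1 : n → K)).mulVec := by
  intro u v huv
  obtain ⟨i⟩ := ‹Nonempty n›
  ext
  simpa [mulVec, dotProduct] using congrFun huv i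

variable [CommSemiring K] [Fintype n]

lemma transpose_withIntercept_mul_mul (X : Matrix n m K) {A : Matrix n n K} (hA : A.IsSymm) :
    (withIntercept X)ᵀ * A * withIntercept X =
      fromBlocks (Xᵀ * A * X) (replicateCol Unit (Xᵀ *ᵥ (A *ᵥ 1)))
        (replicateRow Unit (Xᵀ *ᵥ (A *ᵥ 1))) (of fun _ _ => 1 ⬝ᵥ A *ᵥ 1) := by
  have hrow : 1 ᵥ* (A * X) = Xᵀ *ᵥ (A *ᵥ 1) := by
    rw [← mulVec_transpose, transpose_mul, hA.eq, mulVec_mulVec]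
  rw [withIntercept, transpose_fromCols, transpose_replicateCol, Matrix.mul_assoc, mul_fromCols,
    fromRows_mul_fromCols, ← Matrix.mul_assoc, ← replicateCol_mulVec, ← replicateCol_mulVec,
    ← replicateRow_vecMul, hrow]
  rfl

lemma transpose_withIntercept_mul_self (X : Matrix n m K) :
    (withIntercept X)ᵀ * withIntercept X =
      fromBlocks (Xᵀ * X) (replicateCol Unit (Xᵀ *ᵥ 1)) (replicateRow Unit (Xᵀ *ᵥ 1))
        (of fun _ _ => (Fintype.card n : K)) := by
  classical
  simpa using transpose_withIntercept_mul_mul X (isSymm_one (n := n))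

end Intercept

section BlockMatrix

variable {np nu m : ℕ} {lam Cu mu1 : ℝ} (Xp : Matrix (Fin np) (Fin m) ℝ)
  (Xu : Matrix (Fin nu) (Fin m) ℝ) {R : Matrix (Fin np ⊕ Fin nu) (Fin np ⊕ Fin nu) ℝ}

variable (lam Cu mu1 R) in
/-- The matrix `M = [[M₁₁, M₁₂], [M₁₂ᵀ, M₂₂]]` of the linear system for `(β, β₀)`. -/
noncomputable def blockMatrix : Matrix (Fin m ⊕ Unit) (Fin m ⊕ Unit) ℝ :=
  fromBlocks (pualM11 np nu m lam Cu mu1 Xp Xu R)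
    (replicateCol Unit (pualM12 np nu m Cu mu1 Xp Xu R))
    (replicateRow Unit (pualM12 np nu m Cu mu1 Xp Xu R))
    (of fun _ _ => pualM22 np nu Cu mu1 R)

lemma blockMatrix_eq_add (hR : R.IsSymm) :
    blockMatrix lam Cu mu1 Xp Xu R =
      (fromBlocks (lam • 1) 0 0 0 + (2 * Cu) • ((withIntercept Xu)ᵀ * withIntercept Xu)) +
      ((2 : ℝ) • ((withIntercept (fromRows Xp Xu))ᵀ * R * withIntercept (fromRows Xp Xu)) +
        mu1 • ((withIntercept Xp)ᵀ * withIntercept Xp)) := by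
  simp only [blockMatrix, transpose_withIntercept_mul_self, transpose_withIntercept_mul_mul _ hR,
    fromBlocks_smul, fromBlocks_add, Fintype.card_fin, fromBlocks_inj]
  refine ⟨?_, ?_, ?_, ?_⟩ <;> ext <;>
    simp [pualM11, pualM12, pualM22, ← Pi.one_def, add_assoc]

lemma posDef_blockMatrix [NeZero nu] (hlam : 0 < lam) (hCu : 0 < Cu) (hmu : 0 ≤ mu1)
    (hR : R.PosSemidef) : (blockMatrix lam Cu mu1 Xp Xu R).PosDef := by
  have hR_symm : R.IsSymm := by simpa using hR.isHermitian
  have hridge := posDef_ridge_add_gram_fromCols hlam (mul_pos two_pos hCu) Xu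
    (mulVec_replicateCol_one_injective (n := Fin nu))
  have hsimilarity := (hR.conjTranspose_mul_mul_same (withIntercept (fromRows Xp Xu))).smul
    (zero_le_two (α := ℝ))
  have hpositive := (posSemidef_conjTranspose_mul_self (withIntercept Xp)).smul hmu
  rw [blockMatrix_eq_add Xp Xu hR_symm]
  exact hridge.add_posSemidef (hsimilarity.add hpositive)

end BlockMatrix

end PUAL

/-- With `C_u > 0`, `μ₁ ≥ 0`, `λ > 0`, `n_u ≥ 1` and `R` symmetric positive
semidefinite, the symmetric block matrix `M = [[M₁₁, M₁₂], [M₂₁, M₂₂]]`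
(`M₂₁ = M₁₂ᵀ`) is positive definite; in particular `M₂₂ > 0` and
`B = M₁₁ − (1/M₂₂) M₁₂ M₂₁` is symmetric positive definite, hence invertible. -/
theorem pual_block_matrix_posdef (np nu m : ℕ) (hnu : 1 ≤ nu)
    (lam Cu mu1 : ℝ) (hlam : 0 < lam) (hCu : 0 < Cu) (hmu : 0 ≤ mu1)
    (Xp : Matrix (Fin np) (Fin m) ℝ) (Xu : Matrix (Fin nu) (Fin m) ℝ)
    (R : Matrix (Fin np ⊕ Fin nu) (Fin np ⊕ Fin nu) ℝ) (hRsymm : R.IsSymm)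
    (hRpsd : ∀ v : Fin np ⊕ Fin nu → ℝ, 0 ≤ v ⬝ᵥ R.mulVec v) :
    (∀ v : Fin m ⊕ Unit → ℝ, v ≠ 0 →
      0 < v ⬝ᵥ (Matrix.fromBlocks (pualM11 np nu m lam Cu mu1 Xp Xu R)
          (Matrix.of fun i (_ : Unit) => pualM12 np nu m Cu mu1 Xp Xu R i)
          (Matrix.of fun (_ : Unit) j => pualM12 np nu m Cu mu1 Xp Xu R j)
          (Matrix.of fun _ _ => pualM22 np nu Cu mu1 R)).mulVec v) ∧
    0 < pualM22 np nu Cu mu1 R ∧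
    (pualM11 np nu m lam Cu mu1 Xp Xu R
      - (pualM22 np nu Cu mu1 R)⁻¹ •
          Matrix.vecMulVec (pualM12 np nu m Cu mu1 Xp Xu R)
            (pualM12 np nu m Cu mu1 Xp Xu R)).IsSymm ∧
    (∀ v : Fin m → ℝ, v ≠ 0 →
      0 < v ⬝ᵥ (pualM11 np nu m lam Cu mu1 Xp Xu R
        - (pualM22 np nu Cu mu1 R)⁻¹ •
            Matrix.vecMulVec (pualM12 np nu m Cu mu1 Xp Xu R)
              (pualM12 np nu m Cu mu1 Xp Xu R)).mulVec v) ∧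
    IsUnit (pualM11 np nu m lam Cu mu1 Xp Xu R
      - (pualM22 np nu Cu mu1 R)⁻¹ •
          Matrix.vecMulVec (pualM12 np nu m Cu mu1 Xp Xu R)
            (pualM12 np nu m Cu mu1 Xp Xu R)) := by
  have : NeZero nu := ⟨Nat.one_le_iff_ne_zero.mp hnu⟩
  have hR : R.PosSemidef := .of_dotProduct_mulVec_nonneg hRsymm (by simpa using hRpsd)
  have hM := PUAL.posDef_blockMatrix Xp Xu hlam hCu hmu hR
  have hM22 : 0 < pualM22 np nu Cu mu1 R :=
    (PUAL.posDef_bottomRight_of_fromBlocks hM).diag_pos (i := ())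
  have hB := PUAL.posDef_sub_inv_smul_vecMulVec_of_fromBlocks hM
  exact ⟨fun _ hv => hM.dotProduct_mulVec_pos hv, hM22, hB.isHermitian,
    fun _ hv => hB.dotProduct_mulVec_pos hv, hB.isUnit⟩
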